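/- arXiv:1907.07432 — 3 statements merged into one kernel-verified Lean document; each statement's English description precedes it below -/
import Mathlib

section
/- Let p, q ∈ [0,1]. For every 2×2 complex matrix ρ, the single-qubit quantum-switch output Σ_{i,j∈{1,2}} Ŵ_{ij} (ρ ⊗ |+⟩⟨+|) Ŵ_{ij}†, where Ŵ_{ij} = D_i E_j ⊗ |0⟩⟨0| + E_j D_i ⊗ |1⟩⟨1|, equals [ (1−p)(1−q)·ρ + (1−p)q·Z ρ Z† + p(1−q)·X ρ X† ] ⊗ |+⟩⟨+| + pq·(X·Z) ρ (X·Z)† ⊗ |−⟩⟨−|; in particular, the |−⟩-heralded branch is pq times a unitary conjugate of ρ, so that (X·Z)† [(X·Z) ρ (X·Z)†] (X·Z) = ρ recovers ρ exactly. -/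
open Matrix Kronecker Complex

noncomputable section

def PX : Matrix (Fin 2) (Fin 2) ℂ := !![0, 1; 1, 0]
def PZ : Matrix (Fin 2) (Fin 2) ℂ := !![1, 0; 0, -1]
def I2 : Matrix (Fin 2) (Fin 2) ℂ := 1

def ket0 : Fin 2 → ℂ := ![1, 0]
def ket1 : Fin 2 → ℂ := ![0, 1]
def ketPlus : Fin 2 → ℂ := ((Real.sqrt 2 : ℂ))⁻¹ • (ket0 + ket1)
def ketMinus : Fin 2 → ℂ := ((Real.sqrt 2 : ℂ))⁻¹ • (ket0 - ket1)

def proj (v : Fin 2 → ℂ) : Matrix (Fin 2) (Fin 2) ℂ := vecMulVec v (star v)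

/-- Kronecker product, flattened to `Fin (m*n)` indices (row-major). -/
def kron {m n : ℕ} (A : Matrix (Fin m) (Fin m) ℂ) (B : Matrix (Fin n) (Fin n) ℂ) :
    Matrix (Fin (m * n)) (Fin (m * n)) ℂ :=
  Matrix.reindex finProdFinEquiv finProdFinEquiv (A ⊗ₖ B)

/-- Bit-flip channel Kraus operators: D₁ = √(1-p)·I₂, D₂ = √p·X. -/
def Dk (p : ℝ) : Fin 2 → Matrix (Fin 2) (Fin 2) ℂ :=
  ![(Real.sqrt (1 - p) : ℂ) • I2, (Real.sqrt p : ℂ) • PX]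

/-- Phase-flip channel Kraus operators: E₁ = √(1-q)·I₂, E₂ = √q·Z. -/
def Ek (q : ℝ) : Fin 2 → Matrix (Fin 2) (Fin 2) ℂ :=
  ![(Real.sqrt (1 - q) : ℂ) • I2, (Real.sqrt q : ℂ) • PZ]

/-- Single-qubit quantum-switch Kraus operators Ŵ_{ij} = DᵢEⱼ ⊗ |0⟩⟨0| + EⱼDᵢ ⊗ |1⟩⟨1|. -/
def Wh (p q : ℝ) (i j : Fin 2) : Matrix (Fin 4) (Fin 4) ℂ :=
  kron (Dk p i * Ek q j) (proj ket0) + kron (Ek q j * Dk p i) (proj ket1)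

lemma kron_mul {m n : ℕ} (A C : Matrix (Fin m) (Fin m) ℂ) (B D : Matrix (Fin n) (Fin n) ℂ) :
    kron A B * kron C D = kron (A * C) (B * D) := by
  simp only [kron, Matrix.reindex_apply, Matrix.mul_kronecker_mul]
  rw [Matrix.submatrix_mul_equiv]

lemma kron_conjT {m n : ℕ} (A : Matrix (Fin m) (Fin m) ℂ) (B : Matrix (Fin n) (Fin n) ℂ) :
    (kron A B)ᴴ = kron Aᴴ Bᴴ := by
  ext i j
  simp [kron, Matrix.conjTranspose_apply]

lemma kron_add_left {m n : ℕ} (A C : Matrix (Fin m) (Fin m) ℂ) (B : Matrix (Fin n) (Fin n) ℂ) :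
    kron (A + C) B = kron A B + kron C B := by
  ext i j
  simp [kron, add_mul]

lemma kron_add_right {m n : ℕ} (A : Matrix (Fin m) (Fin m) ℂ) (B D : Matrix (Fin n) (Fin n) ℂ) :
    kron A (B + D) = kron A B + kron A D := by
  ext i j
  simp [kron, mul_add]

lemma kron_smul_left {m n : ℕ} (c : ℂ) (A : Matrix (Fin m) (Fin m) ℂ)
    (B : Matrix (Fin n) (Fin n) ℂ) : kron (c • A) B = c • kron A B := by
  ext i j
  simp [kron, mul_assoc]

lemma kron_smul_left_real {m n : ℕ} (c : ℝ) (A : Matrix (Fin m) (Fin m) ℂ)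
    (B : Matrix (Fin n) (Fin n) ℂ) : kron (c • A) B = c • kron A B := by
  ext i j
  simp [kron, mul_assoc]

lemma kron_neg_left {m n : ℕ} (A : Matrix (Fin m) (Fin m) ℂ)
    (B : Matrix (Fin n) (Fin n) ℂ) : kron (-A) B = kron A (-B) := by
  ext i j
  simp [kron]

lemma proj_entry (v : Fin 2 → ℂ) (i j : Fin 2) : proj v i j = v i * star (v j) := rfl

lemma proj_sum : proj ket0 + proj ket1 = 1 := by
  ext i j
  fin_cases i <;> fin_cases j <;> simp [Matrix.add_apply, proj_entry, ket0, ket1]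

lemma proj_diff : proj ket0 + -proj ket1 = PZ := by
  ext i j
  fin_cases i <;> fin_cases j <;> simp [Matrix.add_apply, proj_entry, ket0, ket1, PZ]

lemma PZ_PX : PZ * PX = -(PX * PZ) := by
  ext i j
  fin_cases i <;> fin_cases j <;> simp [PX, PZ]

lemma PZ_conj : PZ * proj ketPlus * PZᴴ = proj ketMinus := by
  ext i j
  simp only [Matrix.mul_apply, Fin.sum_univ_two, proj_entry, Matrix.conjTranspose_apply]
  fin_cases i <;> fin_cases j <;>
    simp [ketPlus, ketMinus, ket0, ket1, PZ]

lemma XZ_unitary : (PX * PZ)ᴴ * (PX * PZ) = 1 := by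
  ext i j
  fin_cases i <;> fin_cases j <;> simp [PX, PZ, Matrix.mul_apply]

lemma Wh_comm (A : Matrix (Fin 2) (Fin 2) ℂ) :
    kron A (proj ket0) + kron A (proj ket1) = kron A I2 := by
  rw [I2, ← kron_add_right, proj_sum]

/-- Conjugation by a real multiple of a product operator. -/
lemma conj_term (a b : ℝ) (ha : 0 ≤ a) (hb : 0 ≤ b) (A B ρ σ : Matrix (Fin 2) (Fin 2) ℂ) :
    (((Real.sqrt a : ℂ) * (Real.sqrt b : ℂ)) • kron A B) * kron ρ σ *
      (((Real.sqrt a : ℂ) * (Real.sqrt b : ℂ)) • kron A B)ᴴ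
      = (a * b : ℝ) • kron (A * ρ * Aᴴ) (B * σ * Bᴴ) := by
  have h : ((Real.sqrt a : ℂ) * (Real.sqrt b : ℂ)) * ((Real.sqrt a : ℂ) * (Real.sqrt b : ℂ))
      = ((a * b : ℝ) : ℂ) := by
    norm_cast
    rw [mul_mul_mul_comm, Real.mul_self_sqrt ha, Real.mul_self_sqrt hb]
  have hs : star ((Real.sqrt a : ℂ) * (Real.sqrt b : ℂ))
      = (Real.sqrt a : ℂ) * (Real.sqrt b : ℂ) := by
    simp
  rw [Matrix.conjTranspose_smul, hs, Matrix.smul_mul, Matrix.smul_mul, Matrix.mul_smul, smul_smul,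
    h, kron_conjT, kron_mul, kron_mul]
  ext i j
  simp

lemma Wh00 (p q : ℝ) : Wh p q 0 0 =
    ((Real.sqrt (1 - p) : ℂ) * (Real.sqrt (1 - q) : ℂ)) • kron I2 I2 := by
  rw [← Wh_comm, smul_add, ← kron_smul_left, ← kron_smul_left]
  simp [Wh, Dk, Ek, I2, smul_smul, mul_comm, -Complex.coe_smul, -Complex.real_smul]

lemma Wh01 (p q : ℝ) : Wh p q 0 1 =
    ((Real.sqrt (1 - p) : ℂ) * (Real.sqrt q : ℂ)) • kron PZ I2 := by
  rw [← Wh_comm, smul_add, ← kron_smul_left, ← kron_smul_left]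
  simp [Wh, Dk, Ek, I2, smul_smul, mul_comm, -Complex.coe_smul, -Complex.real_smul]

lemma Wh10 (p q : ℝ) : Wh p q 1 0 =
    ((Real.sqrt p : ℂ) * (Real.sqrt (1 - q) : ℂ)) • kron PX I2 := by
  rw [← Wh_comm, smul_add, ← kron_smul_left, ← kron_smul_left]
  simp [Wh, Dk, Ek, I2, smul_smul, mul_comm, -Complex.coe_smul, -Complex.real_smul]

lemma Wh11 (p q : ℝ) : Wh p q 1 1 =
    ((Real.sqrt p : ℂ) * (Real.sqrt q : ℂ)) • kron (PX * PZ) PZ := by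
  have h : kron (PX * PZ) PZ = kron (PX * PZ) (proj ket0) + kron (PZ * PX) (proj ket1) := by
    rw [PZ_PX, kron_neg_left, ← kron_add_right, proj_diff]
  rw [h, smul_add, ← kron_smul_left,
    ← kron_smul_left]
  simp [Wh, Dk, Ek, smul_smul, mul_comm, -Complex.coe_smul, -Complex.real_smul]

theorem single_qubit_quantum_switch (p q : ℝ) (hp : p ∈ Set.Icc (0 : ℝ) 1)
    (hq : q ∈ Set.Icc (0 : ℝ) 1) (ρ : Matrix (Fin 2) (Fin 2) ℂ) :
    (∑ i : Fin 2, ∑ j : Fin 2, Wh p q i j * kron ρ (proj ketPlus) * (Wh p q i j)ᴴ =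
      kron (((1 - p) * (1 - q) : ℝ) • ρ
          + ((1 - p) * q : ℝ) • (PZ * ρ * PZᴴ)
          + (p * (1 - q) : ℝ) • (PX * ρ * PXᴴ)) (proj ketPlus)
      + (p * q : ℝ) • kron ((PX * PZ) * ρ * (PX * PZ)ᴴ) (proj ketMinus))
    ∧ (PX * PZ)ᴴ * ((PX * PZ) * ρ * (PX * PZ)ᴴ) * (PX * PZ) = ρ := by
  obtain ⟨hp0, hp1⟩ := hp
  obtain ⟨hq0, hq1⟩ := hq
  have hp' : 0 ≤ 1 - p := sub_nonneg.2 hp1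
  have hq' : 0 ≤ 1 - q := sub_nonneg.2 hq1
  constructor
  · rw [Fin.sum_univ_two, Fin.sum_univ_two, Fin.sum_univ_two, Wh00, Wh01, Wh10, Wh11]
    erw [conj_term _ _ hp' hq', conj_term _ _ hp' hq0, conj_term _ _ hp0 hq',
      conj_term _ _ hp0 hq0]
    rw [PZ_conj, kron_add_left, kron_add_left, kron_smul_left_real, kron_smul_left_real,
      kron_smul_left_real]
    simp only [I2, Matrix.one_mul, Matrix.conjTranspose_one, Matrix.mul_one]
    exact (add_assoc _ _ _).symm
  · have h := XZ_unitary
    calc (PX * PZ)ᴴ * ((PX * PZ) * ρ * (PX * PZ)ᴴ) * (PX * PZ)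
        = ((PX * PZ)ᴴ * (PX * PZ)) * ρ * ((PX * PZ)ᴴ * (PX * PZ)) := by
          simp only [Matrix.mul_assoc]
      _ = ρ := by rw [h, Matrix.one_mul, Matrix.mul_one]

end
end

section
/- Let ρ_ψ be any 2×2 complex matrix with entries ρ_ψ^{ij} and ρ̃_e any 4×4 complex matrix with 2×2 blocks ρ̃_{e,11}, ρ̃_{e,12}, ρ̃_{e,21}, ρ̃_{e,22}. With ρ₁ = ρ_ψ ⊗ ρ̃_e, ρ₂ = (CNOT ⊗ I₂) ρ₁ (CNOT ⊗ I₂)†, ρ₃ = (H ⊗ I₄) ρ₂ (H ⊗ I₄)†, the projection onto Alice's measurement outcome |10⟩ satisfies Π₁₀ ρ₃ Π₁₀† = |10⟩⟨10| ⊗ (1/2)·( ρ_ψ^{11}·ρ̃_{e,11} − ρ_ψ^{12}·ρ̃_{e,12} − ρ_ψ^{21}·ρ̃_{e,21} + ρ_ψ^{22}·ρ̃_{e,22} ); Bob's corrected (unnormalized) state for outcome 10 is Z·( ρ_ψ^{11}ρ̃_{e,11} − ρ_ψ^{12}ρ̃_{e,12} − ρ_ψ^{21}ρ̃_{e,21}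 + ρ_ψ^{22}ρ̃_{e,22} )·Z† up to the normalization factor 2. -/
open Matrix Kronecker Complex

noncomputable section

/-- Controlled-NOT gate. -/
def CNOT : Matrix (Fin 4) (Fin 4) ℂ :=
  !![1, 0, 0, 0; 0, 1, 0, 0; 0, 0, 0, 1; 0, 0, 1, 0]

/-- Hadamard gate. -/
def Hgate : Matrix (Fin 2) (Fin 2) ℂ := ((Real.sqrt 2 : ℂ))⁻¹ • !![1, 1; 1, -1]

/-- Two-qubit standard basis vectors |ij⟩. -/
def ket2 (i j : Fin 2) : Fin 4 → ℂ := fun k => if (k : ℕ) = 2 * (i : ℕ) + (j : ℕ) then 1 else 0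

/-- Projector Π_{ij} = |ij⟩⟨ij| ⊗ I₂ onto Alice's measurement outcome ij. -/
def Pi2 (i j : Fin 2) : Matrix (Fin 8) (Fin 8) ℂ :=
  kron (vecMulVec (ket2 i j) (star (ket2 i j))) I2

/-- The 2×2 block of a 4×4 matrix in (block-)position (a,b). -/
def blk (ρ : Matrix (Fin 4) (Fin 4) ℂ) (a b : Fin 2) : Matrix (Fin 2) (Fin 2) ℂ :=
  Matrix.of fun i j =>
    ρ ⟨2 * (a : ℕ) + (i : ℕ), by have := a.isLt; have := i.isLt; omega⟩
      ⟨2 * (b : ℕ) + (j : ℕ), by have := b.isLt; have := j.isLt; omega⟩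

/-- Global state after Alice's CNOT and Hadamard gates in the teleportation circuit. -/
def rho3 (ρψ : Matrix (Fin 2) (Fin 2) ℂ) (ρe : Matrix (Fin 4) (Fin 4) ℂ) :
    Matrix (Fin 8) (Fin 8) ℂ :=
  kron Hgate (1 : Matrix (Fin 4) (Fin 4) ℂ) *
    (kron CNOT I2 * kron ρψ ρe * (kron CNOT I2)ᴴ) *
    (kron Hgate (1 : Matrix (Fin 4) (Fin 4) ℂ))ᴴ

/-- The amplitude operator of outcome 10: rows 4, 5 are the only nonzero ones. -/
def M10 : Matrix (Fin 8) (Fin 8) ℂ := Matrix.of fun i j =>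
  if i = 4 then (if j = 0 then (Real.sqrt 2 : ℂ)⁻¹ else if j = 6 then -(Real.sqrt 2 : ℂ)⁻¹ else 0)
  else if i = 5 then
    (if j = 1 then (Real.sqrt 2 : ℂ)⁻¹ else if j = 7 then -(Real.sqrt 2 : ℂ)⁻¹ else 0)
  else 0

lemma kron_apply' {m n : ℕ} (A : Matrix (Fin m) (Fin m) ℂ) (B : Matrix (Fin n) (Fin n) ℂ)
    (i j : Fin (m * n)) :
    kron A B i j = A i.divNat j.divNat * B i.modNat j.modNat := rfl

lemma sum8 (f : Fin 8 → ℂ) :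
    ∑ i, f i = f 0 + f 1 + f 2 + f 3 + f 4 + f 5 + f 6 + f 7 := by
  rw [Fin.sum_univ_eight]

lemma kc_apply (i j : Fin 8) : (kron CNOT I2 : Matrix (Fin 8) (Fin 8) ℂ) i j =
    if j = (![0, 1, 2, 3, 6, 7, 4, 5] : Fin 8 → Fin 8) i then 1 else 0 := by
  refine (kron_apply' (m := 4) (n := 2) CNOT I2 i j).trans ?_
  fin_cases i <;> fin_cases j <;>
    simp [CNOT, I2, Fin.divNat, Fin.modNat, Matrix.one_apply]

lemma ph_apply (i j : Fin 8) :
    (Pi2 1 0 * (kron Hgate (1 : Matrix (Fin 4) (Fin 4) ℂ) : Matrix (Fin 8) (Fin 8) ℂ)) i j =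
    if i = 4 ∨ i = 5 then
      (if j + 4 = i then (Real.sqrt 2 : ℂ)⁻¹ else if j = i then -(Real.sqrt 2 : ℂ)⁻¹ else 0)
    else 0 := by
  have hP : ∀ k : Fin 8, Pi2 1 0 i k = if (i = 4 ∨ i = 5) ∧ k = i then 1 else 0 := by
    intro k
    refine (kron_apply' (m := 4) (n := 2) _ I2 i k).trans ?_
    fin_cases i <;> fin_cases k <;>
      simp [ket2, I2, Fin.divNat, Fin.modNat, Matrix.one_apply, vecMulVec_apply]
  rw [Matrix.mul_apply]
  simp only [hP, ite_mul, one_mul, zero_mul]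
  by_cases h : i = 4 ∨ i = 5
  · simp only [h, true_and, Finset.sum_ite_eq', Finset.mem_univ, if_true]
    refine (kron_apply' (m := 2) (n := 4) Hgate 1 i j).trans ?_
    rcases h with rfl | rfl <;> fin_cases j <;>
      simp [Hgate, Fin.divNat, Fin.modNat, Matrix.one_apply, Fin.ext_iff]
  · simp [h]

lemma M10_eq :
    Pi2 1 0 * (kron Hgate (1 : Matrix (Fin 4) (Fin 4) ℂ) : Matrix (Fin 8) (Fin 8) ℂ) *
      (kron CNOT I2 : Matrix (Fin 8) (Fin 8) ℂ) = M10 := by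
  ext i j
  rw [Matrix.mul_apply, sum8]
  simp only [ph_apply, kc_apply]
  fin_cases i <;> fin_cases j <;> simp [M10]

theorem teleportation_outcome_10 (ρψ : Matrix (Fin 2) (Fin 2) ℂ)
    (ρe : Matrix (Fin 4) (Fin 4) ℂ) :
    Pi2 1 0 * rho3 ρψ ρe * (Pi2 1 0)ᴴ =
      kron (vecMulVec (ket2 1 0) (star (ket2 1 0)))
        (((2 : ℂ))⁻¹ • (ρψ 0 0 • blk ρe 0 0 - ρψ 0 1 • blk ρe 0 1
          - ρψ 1 0 • blk ρe 1 0 + ρψ 1 1 • blk ρe 1 1)) := by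
  have e : Pi2 1 0 * rho3 ρψ ρe * (Pi2 1 0)ᴴ =
      M10 * (kron ρψ ρe : Matrix (Fin 8) (Fin 8) ℂ) * M10ᴴ := by
    rw [← M10_eq]
    simp only [Matrix.conjTranspose_mul, rho3]
    simp only [← Matrix.mul_assoc]
  rw [e]
  have hs : (Real.sqrt 2 : ℂ)⁻¹ * (Real.sqrt 2 : ℂ)⁻¹ = 2⁻¹ := by
    rw [← mul_inv, ← Complex.ofReal_mul, Real.mul_self_sqrt (by norm_num)]
    norm_num
  have hk : ∀ i j : Fin 8, (kron ρψ ρe : Matrix (Fin 8) (Fin 8) ℂ) i j = ρψ (Fin.divNat (m := 2) (n := 4) i) (Fin.divNat (m := 2) (n := 4) j) * ρe (Fin.modNat (m := 2) (n := 4) i) (Fin.modNat (m := 2) (n := 4) j) :=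
    fun i j => rfl
  ext i j
  refine Eq.trans ?_ (kron_apply' (m := 4) (n := 2) _ _ i j).symm
  change Fin 8 at i j
  have hst : star ((Real.sqrt 2 : ℂ)⁻¹) = (Real.sqrt 2 : ℂ)⁻¹ := by
    simp
  rw [Matrix.mul_apply, sum8]
  simp only [Matrix.mul_apply, sum8, hk, Matrix.conjTranspose_apply, M10, Matrix.of_apply]
  generalize (Real.sqrt 2 : ℂ)⁻¹ = s at hs hst
  simp only [Complex.star_def] at hst
  fin_cases i <;> fin_cases j <;>
    simp [ket2, Fin.divNat, Fin.modNat, vecMulVec_apply, blk, hst, ← hs] <;> ring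

end
end

section
/- Let p, q ∈ [0,1] and let θ ∈ [0,π], φ ∈ [0,2π]. Set |ψ⟩ = cos(θ/2)|0⟩ + e^{iφ} sin(θ/2)|1⟩, ρ_ψ = |ψ⟩⟨ψ|, and let ρ̃_e = (1−p)(1−q)·ρ_e + p(1−q)·(I₂⊗X) ρ_e (I₂⊗X)† + (1−p)q·(I₂⊗Z) ρ_e (I₂⊗Z)† + pq·(I₂⊗(Z·X)) ρ_e (I₂⊗(Z·X))† with ρ_e = |Φ+⟩⟨Φ+|, partitioned into 2×2 blocks ρ̃_{e,ij}. Then the fidelity of Bob's teleported state for Alice's outcome 00, ρ_t = 2·(ρ_ψ^{11}ρ̃_{e,11} + ρ_ψ^{12}ρ̃_{e,12} + ρ_ψ^{21}ρ̃_{e,21} + ρ_ψ^{22}ρ̃_{e,22}), satisfies ⟨ψ| ρ_t |ψ⟩ = (1−p) − q(1−2p)·sin²θ + p(1−2q)·sin²θ·cos²φ. -/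
open Matrix Kronecker Complex

noncomputable section

/-- The EPR density matrix ρ_e = |Φ+⟩⟨Φ+|. -/
def rhoE : Matrix (Fin 4) (Fin 4) ℂ :=
  !![1/2, 0, 0, 1/2; 0, 0, 0, 0; 0, 0, 0, 0; 1/2, 0, 0, 1/2]

/-- The Bloch-sphere pure state |ψ⟩ = cos(θ/2)|0⟩ + e^{iφ} sin(θ/2)|1⟩. -/
def ketPsi (θ φ : ℝ) : Fin 2 → ℂ :=
  ![(Real.cos (θ / 2) : ℂ), Complex.exp (φ * Complex.I) * (Real.sin (θ / 2) : ℂ)]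

/-- Its density matrix ρ_ψ = |ψ⟩⟨ψ|. -/
def rhoPsi (θ φ : ℝ) : Matrix (Fin 2) (Fin 2) ℂ := vecMulVec (ketPsi θ φ) (star (ketPsi θ φ))

/-- Bob's teleported state for Alice's outcome 00 given the shared pair ρ̃_e. -/
def rhoT (θ φ : ℝ) (ρ : Matrix (Fin 4) (Fin 4) ℂ) : Matrix (Fin 2) (Fin 2) ℂ :=
  (2 : ℂ) • (rhoPsi θ φ 0 0 • blk ρ 0 0 + rhoPsi θ φ 0 1 • blk ρ 0 1
    + rhoPsi θ φ 1 0 • blk ρ 1 0 + rhoPsi θ φ 1 1 • blk ρ 1 1)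

/-- Fidelity ⟨ψ| ρ |ψ⟩ of a state ρ with respect to the pure state |ψ⟩. -/
def fidelity (θ φ : ℝ) (ρ : Matrix (Fin 2) (Fin 2) ℂ) : ℂ :=
  star (ketPsi θ φ) ⬝ᵥ (ρ *ᵥ ketPsi θ φ)

lemma kron_PX : kron I2 PX = (!![0,1,0,0;1,0,0,0;0,0,0,1;0,0,1,0] : Matrix (Fin 4) (Fin 4) ℂ) := by
  ext i j
  fin_cases i <;> fin_cases j <;>
    simp [kron, I2, PX, finProdFinEquiv, Fin.divNat, Fin.modNat]

lemma kron_PZ : kron I2 PZ = (!![1,0,0,0;0,-1,0,0;0,0,1,0;0,0,0,-1] : Matrix (Fin 4) (Fin 4) ℂ) := by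
  ext i j
  fin_cases i <;> fin_cases j <;>
    simp [kron, I2, PZ, finProdFinEquiv, Fin.divNat, Fin.modNat]

lemma kron_PZX : kron I2 (PZ * PX) =
    (!![0,1,0,0;-1,0,0,0;0,0,0,1;0,0,-1,0] : Matrix (Fin 4) (Fin 4) ℂ) := by
  ext i j
  fin_cases i <;> fin_cases j <;>
    simp [kron, I2, PX, PZ, finProdFinEquiv, Fin.divNat, Fin.modNat]

lemma conj_PX : kron I2 PX * rhoE * (kron I2 PX)ᴴ =
    (!![0,0,0,0;0,1/2,1/2,0;0,1/2,1/2,0;0,0,0,0] : Matrix (Fin 4) (Fin 4) ℂ) := by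
  rw [kron_PX]
  ext i j
  fin_cases i <;> fin_cases j <;>
    simp [rhoE, Matrix.mul_apply, Fin.sum_univ_four]

lemma conj_PZ : kron I2 PZ * rhoE * (kron I2 PZ)ᴴ =
    (!![1/2,0,0,-1/2;0,0,0,0;0,0,0,0;-1/2,0,0,1/2] : Matrix (Fin 4) (Fin 4) ℂ) := by
  rw [kron_PZ]
  ext i j
  fin_cases i <;> fin_cases j <;>
    simp [rhoE, Matrix.mul_apply, Fin.sum_univ_four] <;> norm_num

lemma conj_PZX : kron I2 (PZ * PX) * rhoE * (kron I2 (PZ * PX))ᴴ =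
    (!![0,0,0,0;0,1/2,-1/2,0;0,-1/2,1/2,0;0,0,0,0] : Matrix (Fin 4) (Fin 4) ℂ) := by
  rw [kron_PZX]
  ext i j
  fin_cases i <;> fin_cases j <;>
    simp [rhoE, Matrix.mul_apply, Fin.sum_univ_four] <;> norm_num

theorem fidelity_classical_trajectory (p q θ φ : ℝ) (hp : p ∈ Set.Icc (0 : ℝ) 1)
    (hq : q ∈ Set.Icc (0 : ℝ) 1)
    (hθ : θ ∈ Set.Icc (0 : ℝ) Real.pi) (hφ : φ ∈ Set.Icc (0 : ℝ) (2 * Real.pi)) :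
    fidelity θ φ (rhoT θ φ
        (((1 - p) * (1 - q) : ℝ) • rhoE
          + (p * (1 - q) : ℝ) • (kron I2 PX * rhoE * (kron I2 PX)ᴴ)
          + ((1 - p) * q : ℝ) • (kron I2 PZ * rhoE * (kron I2 PZ)ᴴ)
          + (p * q : ℝ) • (kron I2 (PZ * PX) * rhoE * (kron I2 (PZ * PX))ᴴ))) =
      (((1 - p) - q * (1 - 2 * p) * Real.sin θ ^ 2
          + p * (1 - 2 * q) * Real.sin θ ^ 2 * Real.cos φ ^ 2 : ℝ) : ℂ) := by
  have e1 : Complex.exp (φ * Complex.I) = (Real.cos φ : ℂ) + (Real.sin φ : ℂ) * Complex.I := by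
    rw [Complex.exp_mul_I, Complex.ofReal_cos, Complex.ofReal_sin]
  have hs : Real.sin θ = 2 * Real.sin (θ / 2) * Real.cos (θ / 2) := by
    rw [← Real.sin_two_mul]; congr 1; ring
  have h1 := Real.sin_sq_add_cos_sq (θ / 2)
  have h2 := Real.sin_sq_add_cos_sq φ
  rw [conj_PX, conj_PZ, conj_PZX, hs]
  unfold fidelity rhoT rhoPsi ketPsi
  rw [e1]
  generalize Real.sin (θ / 2) = s at *
  generalize Real.cos (θ / 2) = c at *
  generalize Real.sin φ = b at *
  generalize Real.cos φ = a at *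
  simp [blk, rhoE, vecMulVec_apply, dotProduct, mulVec, Fin.sum_univ_two]
  have h1 : (s : ℂ) ^ 2 + (c : ℂ) ^ 2 = 1 := by exact_mod_cast h1
  have h2 : (b : ℂ) ^ 2 + (a : ℂ) ^ 2 = 1 := by exact_mod_cast h2
  have huv : ((a : ℂ) + b * Complex.I) * (a - b * Complex.I) = 1 := by
    linear_combination h2 - (b : ℂ) ^ 2 * Complex.I_sq
  have G1 : ((c : ℂ) ^ 2 + s ^ 2 * (((a : ℂ) + b * Complex.I) * (a - b * Complex.I))) ^ 2 = 1 := by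
    rw [huv, mul_one, add_comm, h1, one_pow]
  have G3 : ((c : ℂ) ^ 2 - s ^ 2 * (((a : ℂ) + b * Complex.I) * (a - b * Complex.I))) ^ 2
      = 1 - 4 * s ^ 2 * c ^ 2 := by
    rw [huv]
    linear_combination ((s : ℂ) ^ 2 + c ^ 2 + 1) * h1
  have G4 : (2 * (b : ℂ) * Complex.I) ^ 2 = 4 * a ^ 2 - 4 := by
    linear_combination 4 * (b : ℂ) ^ 2 * Complex.I_sq - 4 * h2
  linear_combination (1 - (p : ℂ)) * (1 - q) * G1 + (1 - (p : ℂ)) * q * G3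
    - (p : ℂ) * q * s ^ 2 * c ^ 2 * G4

end
end
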